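/- Let n ≥ 1, s ∈ (0,1), and let u : ℝⁿ → ℝ be a Schwartz function. Set B_{n,s} := (∫_{ℝⁿ} (1 + |ξ|²)^{−(n+2s)/2} dξ)^{-1} and, for x ∈ ℝⁿ and y > 0, define the Poisson kernel P(x,y) := B_{n,s} · y^{2s} / (|x|² + y²)^{(n+2s)/2} and the extension v(x,y) := ∫_{ℝⁿ} P(x−ξ, y) u(ξ) dξ. Then for every x ∈ ℝⁿ, lim_{y→0⁺} (v(x,y) − u(x))/y^{2s} = B_{n,s} · lim_{ε→0⁺} ∫_{{ξ : |ξ−x| > ε}} (u(ξ) − u(x))/|x−ξ|^{n+2s} dξ, and in particular the principal value limit on the right-hand side exists. (Thus the normal-derivative trace of the Caffarelli–Silvestre extension recovers, up to a constant, the fractional Laplacian of u.) -/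

import Mathlib

open MeasureTheory Filter Metric Set
open scoped Topology

/-- The normalization constant of the Caffarelli–Silvestre Poisson kernel:
`B_{n,s} := (∫_{ℝⁿ} (1 + |ξ|²)^{−(n+2s)/2} dξ)⁻¹`. -/
noncomputable def poissonB (n : ℕ) (s : ℝ) : ℝ :=
  (∫ ξ : EuclideanSpace ℝ (Fin n), (1 + ‖ξ‖ ^ 2) ^ (-(((n : ℝ) + 2 * s) / 2)))⁻¹

/-!
Since reflection about `x` preserves Haar measure, integrating `u ξ - u x` against an even kernel
`k (ξ - x)` is the same as integrating half of the second difference `u (x + z) + u (x - z) - 2 u x`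
against `k z`, and the second difference is small enough at `z = 0` to be integrable against
`‖z‖ ^ (-(d + 2 * s))`, where `d` is the dimension. The truncated kernel in the principal value and
the Poisson kernel divided by `B y ^ (2 * s)` are both even, dominated by `‖z‖ ^ (-(d + 2 * s))` and
converge to it, so dominated convergence gives both integrals the same limit. Since the Poisson
kernel has mass one, the subtracted `u x` can be moved inside the integral defining the extension.
-/

open Asymptotics Module

section Taylor

variable {E F : Type*} [NormedAddCommGroup E] [NormedAddCommGroup F] [NormedSpace ℝ F]
  {u : E → F} {x : E}

/-- The symmetric second difference of `u` at `x` with step `z`. -/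
def secondDiff (u : E → F) (x z : E) : F :=
  u (x + z) + u (x - z) - (2 : ℝ) • u x

lemma secondDiff_zero (u : E → F) (x : E) : secondDiff u x 0 = 0 := by
  simp [secondDiff, two_smul]

lemma secondDiff_eq_add (u : E → F) (x z : E) :
    secondDiff u x z = (u (x + z) - u x) + (u (x - z) - u x) := by
  rw [secondDiff, two_smul]
  abel

variable [NormedSpace ℝ E]

lemma isBigO_sub_sub_fderiv_of_contDiffAt (hu : ContDiffAt ℝ 2 u x) :
    (fun z ↦ u (x + z) - u x - fderiv ℝ u x z) =O[𝓝 0] fun z ↦ ‖z‖ ^ 2 := by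
  have h_diff : ∀ᶠ y in 𝓝 x, DifferentiableAt ℝ u y :=
    (hu.eventually (by simp)).mono fun y hy ↦ hy.differentiableAt two_ne_zero
  have h_fderiv : (fderiv ℝ u · - fderiv ℝ u x) =O[𝓝 x] (· - x) :=
    ((hu.fderiv_right (m := 1) (by norm_num)).differentiableAt one_ne_zero).isBigO_sub
  obtain ⟨C, hC, h_bound⟩ := h_fderiv.exists_nonneg
  obtain ⟨r, hr, h_ball⟩ := Metric.eventually_nhds_iff_ball.1 (h_diff.and h_bound.bound)
  refine IsBigO.of_bound C ?_
  filter_upwards [ball_mem_nhds 0 hr] with z hz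
  have h_sub : closedBall x ‖z‖ ⊆ ball x r := closedBall_subset_ball (by simpa using hz)
  have h_lip : ∀ y ∈ closedBall x ‖z‖, ‖fderiv ℝ u y - fderiv ℝ u x‖ ≤ C * ‖z‖ := fun y hy ↦
    (h_ball y (h_sub hy)).2.trans <| by gcongr; exact mem_closedBall_iff_norm.1 hy
  have h_mvt := (convex_closedBall x ‖z‖).norm_image_sub_le_of_norm_fderiv_le'
    (fun y hy ↦ (h_ball y (h_sub hy)).1) h_lip (y := x + z)
    (mem_closedBall_self (norm_nonneg z)) (by simp)
  simpa [sq, mul_assoc] using h_mvt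

lemma isBigO_secondDiff_of_contDiffAt (hu : ContDiffAt ℝ 2 u x) :
    secondDiff u x =O[𝓝 0] fun z ↦ ‖z‖ ^ 2 := by
  have h_taylor := isBigO_sub_sub_fderiv_of_contDiffAt hu
  have h_neg : Tendsto (fun z : E ↦ -z) (𝓝 0) (𝓝 0) := by
    simpa using (continuous_neg (G := E)).tendsto 0
  refine (h_taylor.add ((h_taylor.comp_tendsto h_neg).congr_right (by simp))).congr_left fun z ↦ ?_
  simp only [Function.comp_apply, map_neg, secondDiff_eq_add, ← sub_eq_add_neg]
  abel

end Taylor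

section WeightComparison

lemma rpow_neg_le_mul_rpow_neg_of_le_mul {a b c q : ℝ} (hq : 0 ≤ q) (hb : 0 < b) (hc : 0 < c)
    (h : c ≤ a * b) : b ^ (-q) ≤ a ^ q * c ^ (-q) := by
  have ha : 0 < a := pos_of_mul_pos_left (hc.trans_le h) hb.le
  calc b ^ (-q) = a ^ q * (a * b) ^ (-q) := by
        rw [Real.mul_rpow ha.le hb.le, ← mul_assoc, ← Real.rpow_add ha, add_neg_cancel,
          Real.rpow_zero, one_mul]
    _ ≤ a ^ q * c ^ (-q) := by
        have := Real.rpow_le_rpow_of_nonpos hc h (neg_nonpos.2 hq)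
        gcongr

lemma sq_rpow_neg_half {r : ℝ} (hr : 0 ≤ r) (p : ℝ) : (r ^ 2) ^ (-(p / 2)) = r ^ (-p) := by
  rw [← Real.rpow_natCast_mul hr]
  congr 1
  push_cast
  ring

variable {E : Type*} [SeminormedAddCommGroup E]

lemma one_add_norm_add_sq_le (x z : E) :
    1 + ‖x + z‖ ^ 2 ≤ 2 * (1 + ‖x‖ ^ 2) * (1 + ‖z‖ ^ 2) := by
  have h_add : ‖x + z‖ ^ 2 ≤ (‖x‖ + ‖z‖) ^ 2 := by gcongr; exact norm_add_le x z
  nlinarith [sq_nonneg (‖x‖ - ‖z‖), sq_nonneg (‖x‖ * ‖z‖)]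

end WeightComparison

section Kernels

variable {E : Type*} [NormedAddCommGroup E] {p : ℝ}

/-- A family of regularizations `k ε`, `ε → 0⁺`, of the singular Riesz kernel `‖z‖ ^ (-p)`: even
functions dominated by it and converging to it off the origin, and such that each `k ε` decays like
`‖z‖ ^ (-p)` at infinity without being singular at the origin. -/
structure IsRieszRegularization [MeasurableSpace E] (p : ℝ) (k : ℝ → E → ℝ) : Prop where
  measurable (ε : ℝ) : Measurable (k ε)
  even (ε : ℝ) (z : E) : k ε (-z) = k ε z
  norm_le {ε : ℝ} (hε : 0 < ε) {z : E} (hz : z ≠ 0) : ‖k ε z‖ ≤ ‖z‖ ^ (-p)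
  exists_norm_le {ε : ℝ} (hε : 0 < ε) : ∃ C, ∀ z, ‖k ε z‖ ≤ C * (1 + ‖z‖ ^ 2) ^ (-(p / 2))
  tendsto {z : E} (hz : z ≠ 0) : Tendsto (k · z) (𝓝[>] 0) (𝓝 (‖z‖ ^ (-p)))

/-- The kernel `‖z‖ ^ (-p)` cut off to `{z | ε < ‖z‖}`, as in a principal value integral. -/
noncomputable def truncatedRieszKernel (p ε : ℝ) : E → ℝ :=
  {z | ε < ‖z‖}.indicator fun z ↦ ‖z‖ ^ (-p)

/-- The kernel `(‖z‖ ^ 2 + y ^ 2) ^ (-p / 2)`, which for `p = d + 2 * s` is the unnormalized Poisson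
kernel without its factor `y ^ (2 * s)`. -/
noncomputable def smoothedRieszKernel (p y : ℝ) (z : E) : ℝ :=
  (‖z‖ ^ 2 + y ^ 2) ^ (-(p / 2))

lemma norm_truncatedRieszKernel_le (p ε : ℝ) (z : E) :
    ‖truncatedRieszKernel p ε z‖ ≤ ‖z‖ ^ (-p) :=
  (norm_indicator_le_norm_self _ _).trans_eq (Real.norm_of_nonneg (by positivity))

lemma norm_truncatedRieszKernel_le_one_add (hp : 0 ≤ p) {ε : ℝ} (hε : 0 < ε) (z : E) :
    ‖truncatedRieszKernel p ε z‖ ≤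
      (1 + (ε ^ 2)⁻¹) ^ (p / 2) * (1 + ‖z‖ ^ 2) ^ (-(p / 2)) := by
  by_cases hz : ε < ‖z‖
  · have hz_pos : 0 < ‖z‖ := hε.trans hz
    have h_one : 1 ≤ (ε ^ 2)⁻¹ * ‖z‖ ^ 2 := by
      rw [← inv_mul_cancel₀ (pow_pos hε 2).ne']
      gcongr
    calc ‖truncatedRieszKernel p ε z‖ ≤ ‖z‖ ^ (-p) := norm_truncatedRieszKernel_le p ε z
      _ = (‖z‖ ^ 2) ^ (-(p / 2)) := (sq_rpow_neg_half hz_pos.le p).symm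
      _ ≤ _ := rpow_neg_le_mul_rpow_neg_of_le_mul (by positivity) (by positivity) (by positivity)
        (by linarith)
  · rw [truncatedRieszKernel, indicator_of_notMem (s := {z : E | ε < ‖z‖}) hz, norm_zero]
    positivity

lemma smoothedRieszKernel_nonneg (p y : ℝ) (z : E) : 0 ≤ smoothedRieszKernel p y z :=
  Real.rpow_nonneg (by positivity) _

lemma smoothedRieszKernel_le (hp : 0 ≤ p) (y : ℝ) {z : E} (hz : z ≠ 0) :
    smoothedRieszKernel p y z ≤ ‖z‖ ^ (-p) := by
  rw [← sq_rpow_neg_half (norm_nonneg z)]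
  exact Real.rpow_le_rpow_of_nonpos (by positivity) (by linarith [sq_nonneg y]) (by linarith)

lemma smoothedRieszKernel_le_one_add (hp : 0 ≤ p) {y : ℝ} (hy : 0 < y) (z : E) :
    smoothedRieszKernel p y z ≤ (1 + (y ^ 2)⁻¹) ^ (p / 2) * (1 + ‖z‖ ^ 2) ^ (-(p / 2)) := by
  refine rpow_neg_le_mul_rpow_neg_of_le_mul (by positivity) (by positivity) (by positivity) ?_
  have h_expand : (1 + (y ^ 2)⁻¹) * (‖z‖ ^ 2 + y ^ 2) =
      1 + ‖z‖ ^ 2 + (y ^ 2 + (y ^ 2)⁻¹ * ‖z‖ ^ 2) := by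
    field_simp
    ring
  rw [h_expand]
  exact le_add_of_nonneg_right (by positivity)

lemma tendsto_smoothedRieszKernel (p : ℝ) {z : E} (hz : z ≠ 0) :
    Tendsto (smoothedRieszKernel p · z) (𝓝 0) (𝓝 (‖z‖ ^ (-p))) := by
  have h_zero : smoothedRieszKernel p 0 z = ‖z‖ ^ (-p) := by
    simp [smoothedRieszKernel, sq_rpow_neg_half]
  rw [← h_zero]
  refine ContinuousAt.rpow_const (by fun_prop) (Or.inl ?_)
  have := norm_pos_iff.2 hz
  positivity

lemma smoothedRieszKernel_eq_rpow_mul [NormedSpace ℝ E] (p : ℝ) {y : ℝ} (hy : 0 < y) (z : E) :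
    smoothedRieszKernel p y z = y ^ (-p) * (1 + ‖y⁻¹ • z‖ ^ 2) ^ (-(p / 2)) := by
  have h_factor : ‖z‖ ^ 2 + y ^ 2 = y ^ 2 * (1 + ‖y⁻¹ • z‖ ^ 2) := by
    rw [norm_smul, Real.norm_of_nonneg (by positivity)]
    field_simp
    ring
  rw [smoothedRieszKernel, h_factor, Real.mul_rpow (by positivity) (by positivity),
    sq_rpow_neg_half hy.le]

variable [MeasurableSpace E] [BorelSpace E]

lemma isRieszRegularization_truncatedRieszKernel (hp : 0 ≤ p) :
    IsRieszRegularization p (truncatedRieszKernel (E := E) p) where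
  measurable ε := (measurable_norm.pow_const _).indicator
    (measurableSet_lt measurable_const measurable_norm)
  even ε z := by simp [truncatedRieszKernel, indicator]
  norm_le _ z _ := norm_truncatedRieszKernel_le p _ z
  exists_norm_le hε := ⟨_, norm_truncatedRieszKernel_le_one_add hp hε⟩
  tendsto {z} hz := by
    refine tendsto_const_nhds.congr' ?_
    filter_upwards [nhdsWithin_le_nhds (eventually_lt_nhds (norm_pos_iff.2 hz))] with ε hε
    exact (indicator_of_mem (s := {z : E | ε < ‖z‖}) hε fun z ↦ ‖z‖ ^ (-p)).symm

lemma isRieszRegularization_smoothedRieszKernel (hp : 0 ≤ p) :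
    IsRieszRegularization p (smoothedRieszKernel (E := E) p) where
  measurable y := ((measurable_norm.pow_const 2).add_const _).pow_const _
  even y z := by simp [smoothedRieszKernel]
  norm_le _ _ hz := (Real.norm_of_nonneg (smoothedRieszKernel_nonneg p _ _)).trans_le
    (smoothedRieszKernel_le hp _ hz)
  exists_norm_le hy := ⟨_, fun z ↦ (Real.norm_of_nonneg (smoothedRieszKernel_nonneg p _ z)).trans_le
    (smoothedRieszKernel_le_one_add hp hy z)⟩
  tendsto hz := (tendsto_smoothedRieszKernel p hz).mono_left nhdsWithin_le_nhds

end Kernels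

section Integrability

variable {E F : Type*} [NormedAddCommGroup E] [MeasurableSpace E] [BorelSpace E]
  [NormedAddCommGroup F] [NormedSpace ℝ F] {μ : Measure E} {p : ℝ} {u : E → F}

lemma aestronglyMeasurable_of_integrable_one_add_norm_sq_rpow_smul
    (hu : Integrable (fun ξ ↦ (1 + ‖ξ‖ ^ 2) ^ (-(p / 2)) • u ξ) μ) : AEStronglyMeasurable u μ := by
  have h_weight : Measurable fun ξ : E ↦ ((1 + ‖ξ‖ ^ 2) ^ (-(p / 2)))⁻¹ := by fun_prop
  refine (h_weight.aestronglyMeasurable.smul hu.1).congr (.of_forall fun ξ ↦ ?_)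
  have h_pos : 0 < (1 + ‖ξ‖ ^ 2) ^ (-(p / 2)) := by positivity
  exact inv_smul_smul₀ h_pos.ne' (u ξ)

lemma integrable_smul_comp_add_left [μ.IsAddLeftInvariant] (hp : 0 ≤ p)
    (hu : Integrable (fun ξ ↦ (1 + ‖ξ‖ ^ 2) ^ (-(p / 2)) • u ξ) μ) {k : E → ℝ}
    (hk : Measurable k) {C : ℝ} (hkC : ∀ z, ‖k z‖ ≤ C * (1 + ‖z‖ ^ 2) ^ (-(p / 2))) (x : E) :
    Integrable (fun z ↦ k z • u (x + z)) μ := by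
  have hC : 0 ≤ C := by simpa using (norm_nonneg _).trans (hkC 0)
  have h_shift (z : E) : (1 + ‖z‖ ^ 2) ^ (-(p / 2)) ≤
      (2 * (1 + ‖x‖ ^ 2)) ^ (p / 2) * (1 + ‖x + z‖ ^ 2) ^ (-(p / 2)) :=
    rpow_neg_le_mul_rpow_neg_of_le_mul (by positivity) (by positivity) (by positivity)
      (one_add_norm_add_sq_le x z)
  have hu_meas : AEStronglyMeasurable (fun z ↦ u (x + z)) μ :=
    (aestronglyMeasurable_of_integrable_one_add_norm_sq_rpow_smul hu).comp_quasiMeasurePreserving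
      (measurePreserving_add_left μ x).quasiMeasurePreserving
  refine ((hu.comp_add_left x).norm.const_mul (C * (2 * (1 + ‖x‖ ^ 2)) ^ (p / 2))).mono'
    (hk.aestronglyMeasurable.smul hu_meas) (.of_forall fun z ↦ ?_)
  calc ‖k z • u (x + z)‖ = ‖k z‖ * ‖u (x + z)‖ := norm_smul _ _
    _ ≤ C * ((2 * (1 + ‖x‖ ^ 2)) ^ (p / 2) * (1 + ‖x + z‖ ^ 2) ^ (-(p / 2))) * ‖u (x + z)‖ := by
        gcongr
        exact (hkC z).trans (by gcongr; exact h_shift z)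
    _ = C * (2 * (1 + ‖x‖ ^ 2)) ^ (p / 2) * ‖(1 + ‖x + z‖ ^ 2) ^ (-(p / 2)) • u (x + z)‖ := by
        rw [norm_smul, Real.norm_of_nonneg (by positivity)]
        ring

variable [NormedSpace ℝ E] [FiniteDimensional ℝ E] [μ.IsAddHaarMeasure]

lemma integrable_one_add_norm_sq_rpow_neg_half (hp : finrank ℝ E < p) :
    Integrable (fun ξ : E ↦ (1 + ‖ξ‖ ^ 2) ^ (-(p / 2))) μ := by
  simpa only [neg_div] using integrable_rpow_neg_one_add_norm_sq hp

namespace IsRieszRegularization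

variable {k : ℝ → E → ℝ} {ε : ℝ}

lemma integrable (hk : IsRieszRegularization p k) (hε : 0 < ε) (hp : finrank ℝ E < p) :
    Integrable (k ε) μ :=
  have ⟨C, hC⟩ := hk.exists_norm_le hε
  ((integrable_one_add_norm_sq_rpow_neg_half hp).const_mul C).mono'
    (hk.measurable ε).aestronglyMeasurable (.of_forall hC)

lemma integrable_smul_sub (hk : IsRieszRegularization p k) (hε : 0 < ε) (hp : finrank ℝ E < p)
    (hu : Integrable (fun ξ ↦ (1 + ‖ξ‖ ^ 2) ^ (-(p / 2)) • u ξ) μ) (x : E) :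
    Integrable (fun z ↦ k ε z • (u (x + z) - u x)) μ := by
  have hp_nonneg : 0 ≤ p := (Nat.cast_nonneg _).trans hp.le
  obtain ⟨C, hC⟩ := hk.exists_norm_le hε
  simp only [smul_sub]
  exact (integrable_smul_comp_add_left hp_nonneg hu (hk.measurable ε) hC x).sub
    ((hk.integrable hε hp).smul_const (u x))

lemma integrable_smul_sub_neg (hk : IsRieszRegularization p k) (hε : 0 < ε)
    (hp : finrank ℝ E < p) (hu : Integrable (fun ξ ↦ (1 + ‖ξ‖ ^ 2) ^ (-(p / 2)) • u ξ) μ) (x : E) :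
    Integrable (fun z ↦ k ε z • (u (x - z) - u x)) μ := by
  simpa only [hk.even, ← sub_eq_add_neg] using (hk.integrable_smul_sub hε hp hu x).comp_neg

lemma integrable_smul_secondDiff (hk : IsRieszRegularization p k) (hε : 0 < ε)
    (hp : finrank ℝ E < p) (hu : Integrable (fun ξ ↦ (1 + ‖ξ‖ ^ 2) ^ (-(p / 2)) • u ξ) μ) (x : E) :
    Integrable (fun z ↦ k ε z • secondDiff u x z) μ := by
  simp only [secondDiff_eq_add, smul_add]
  exact (hk.integrable_smul_sub hε hp hu x).add (hk.integrable_smul_sub_neg hε hp hu x)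

lemma integral_smul_sub_eq_integral_secondDiff (hk : IsRieszRegularization p k) (hε : 0 < ε)
    (hp : finrank ℝ E < p) (hu : Integrable (fun ξ ↦ (1 + ‖ξ‖ ^ 2) ^ (-(p / 2)) • u ξ) μ) (x : E) :
    ∫ ξ, k ε (ξ - x) • (u ξ - u x) ∂μ = (2 : ℝ)⁻¹ • ∫ z, k ε z • secondDiff u x z ∂μ := by
  have h_neg : ∫ z, k ε z • (u (x - z) - u x) ∂μ = ∫ z, k ε z • (u (x + z) - u x) ∂μ := by
    rw [← integral_neg_eq_self (fun z ↦ k ε z • (u (x + z) - u x)) μ]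
    simp only [hk.even, ← sub_eq_add_neg]
  have h_add : ∫ z, k ε z • secondDiff u x z ∂μ = (2 : ℝ) • ∫ z, k ε z • (u (x + z) - u x) ∂μ := by
    simp only [secondDiff_eq_add, smul_add]
    rw [integral_add (hk.integrable_smul_sub hε hp hu x) (hk.integrable_smul_sub_neg hε hp hu x),
      h_neg, two_smul]
  rw [h_add, inv_smul_smul₀ two_ne_zero,
    ← integral_add_left_eq_self (fun ξ ↦ k ε (ξ - x) • (u ξ - u x)) x]
  simp only [add_sub_cancel_left]

end IsRieszRegularization

lemma aestronglyMeasurable_secondDiff (hu : AEStronglyMeasurable u μ) (x : E) :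
    AEStronglyMeasurable (secondDiff u x) μ :=
  ((hu.comp_quasiMeasurePreserving (measurePreserving_add_left μ x).quasiMeasurePreserving).add
    (hu.comp_quasiMeasurePreserving
      (Measure.measurePreserving_sub_left μ x).quasiMeasurePreserving)).sub
        aestronglyMeasurable_const

lemma integrable_norm_rpow_neg_smul_secondDiff [Nontrivial E] {α : ℝ} (hp : finrank ℝ E < p)
    (hα : p < finrank ℝ E + α) {x : E}
    (hu : Integrable (fun ξ ↦ (1 + ‖ξ‖ ^ 2) ^ (-(p / 2)) • u ξ) μ)
    (hux : secondDiff u x =O[𝓝 0] fun z ↦ ‖z‖ ^ α) :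
    Integrable (fun z ↦ ‖z‖ ^ (-p) • secondDiff u x z) μ := by
  have hp_nonneg : 0 ≤ p := (Nat.cast_nonneg _).trans hp.le
  have hk := isRieszRegularization_truncatedRieszKernel (E := E) hp_nonneg
  obtain ⟨C, h_bound⟩ := hux.bound
  obtain ⟨r, hr, h_ball⟩ := Metric.eventually_nhds_iff_ball.1 h_bound
  have h_meas : AEStronglyMeasurable (fun z ↦ ‖z‖ ^ (-p) • secondDiff u x z) μ :=
    (measurable_norm.pow_const _).aestronglyMeasurable.smul <| aestronglyMeasurable_secondDiff
      (aestronglyMeasurable_of_integrable_one_add_norm_sq_rpow_smul hu) x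
  have h_near : IntegrableOn (fun z ↦ ‖z‖ ^ (-p) • secondDiff u x z) (ball 0 r) μ := by
    refine integrableOn_ball_of_norm_le_rpow (C := C) (α := p - α) finrank_pos (by linarith)
      ?_ h_meas
    filter_upwards [ae_restrict_mem measurableSet_ball, ae_restrict_of_ae (Measure.ae_ne μ 0)]
      with z hz hz_ne
    calc ‖‖z‖ ^ (-p) • secondDiff u x z‖ = ‖z‖ ^ (-p) * ‖secondDiff u x z‖ := by
          rw [norm_smul, Real.norm_of_nonneg (by positivity)]
      _ ≤ ‖z‖ ^ (-p) * (C * ‖z‖ ^ α) := by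
          gcongr
          simpa [abs_of_nonneg (Real.rpow_nonneg (norm_nonneg z) α)] using h_ball z hz
      _ = C * ‖z‖ ^ (-(p - α)) := by
          rw [mul_left_comm, ← Real.rpow_add (norm_pos_iff.2 hz_ne), neg_sub', sub_neg_eq_add]
  have h_far : IntegrableOn (fun z ↦ ‖z‖ ^ (-p) • secondDiff u x z) (ball 0 r)ᶜ μ := by
    refine (hk.integrable_smul_secondDiff (half_pos hr) hp hu x).integrableOn.congr_fun
      (fun z hz ↦ ?_) measurableSet_ball.compl
    have hz_mem : r / 2 < ‖z‖ := (half_lt_self hr).trans_le (by simpa using hz)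
    simp only [truncatedRieszKernel]
    rw [indicator_of_mem (s := {z : E | r / 2 < ‖z‖}) hz_mem]
  rw [← integrableOn_univ, ← union_compl_self (ball (0 : E) r)]
  exact h_near.union h_far

end Integrability

section Limit

variable {E F : Type*} [NormedAddCommGroup E] [NormedSpace ℝ E] [FiniteDimensional ℝ E]
  [MeasurableSpace E] [BorelSpace E] [NormedAddCommGroup F] [NormedSpace ℝ F]
  {μ : Measure E} {p : ℝ} {u : E → F} {x : E}

/-- The hypersingular integral of order `p` of `u` at `x`, that is, the principal value of
`∫ ‖ξ - x‖ ^ (-p) • (u ξ - u x)`, encoded in its absolutely convergent symmetrized form. -/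
noncomputable def hypersingularIntegral (μ : Measure E) (p : ℝ) (u : E → F) (x : E) : F :=
  (2 : ℝ)⁻¹ • ∫ z, ‖z‖ ^ (-p) • secondDiff u x z ∂μ

variable [μ.IsAddHaarMeasure]

lemma IsRieszRegularization.tendsto_integral_smul_sub {k : ℝ → E → ℝ}
    (hk : IsRieszRegularization p k) (hp : finrank ℝ E < p)
    (hu : Integrable (fun ξ ↦ (1 + ‖ξ‖ ^ 2) ^ (-(p / 2)) • u ξ) μ)
    (hux : Integrable (fun z ↦ ‖z‖ ^ (-p) • secondDiff u x z) μ) :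
    Tendsto (fun ε ↦ ∫ ξ, k ε (ξ - x) • (u ξ - u x) ∂μ) (𝓝[>] 0)
      (𝓝 (hypersingularIntegral μ p u x)) := by
  suffices h_symm : Tendsto (fun ε ↦ ∫ z, k ε z • secondDiff u x z ∂μ) (𝓝[>] 0)
      (𝓝 (∫ z, ‖z‖ ^ (-p) • secondDiff u x z ∂μ)) by
    refine (h_symm.const_smul (2 : ℝ)⁻¹).congr' ?_
    filter_upwards [self_mem_nhdsWithin] with ε hε
    exact (hk.integral_smul_sub_eq_integral_secondDiff hε hp hu x).symm
  refine tendsto_integral_filter_of_dominated_convergence _ ?_ ?_ hux.norm ?_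
  · filter_upwards [self_mem_nhdsWithin] with ε hε
    exact (hk.integrable_smul_secondDiff hε hp hu x).aestronglyMeasurable
  · filter_upwards [self_mem_nhdsWithin] with ε hε
    refine .of_forall fun z ↦ ?_
    rcases eq_or_ne z 0 with rfl | hz
    · simp [secondDiff_zero]
    · rw [norm_smul, norm_smul]
      gcongr
      exact (hk.norm_le hε hz).trans (le_abs_self _)
  · refine .of_forall fun z ↦ ?_
    rcases eq_or_ne z 0 with rfl | hz
    · simp [secondDiff_zero]
    · exact (hk.tendsto hz).smul_const _

lemma tendsto_setIntegral_norm_rpow_inv_smul_sub (hp : finrank ℝ E < p)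
    (hu : Integrable (fun ξ ↦ (1 + ‖ξ‖ ^ 2) ^ (-(p / 2)) • u ξ) μ)
    (hux : Integrable (fun z ↦ ‖z‖ ^ (-p) • secondDiff u x z) μ) :
    Tendsto (fun ε ↦ ∫ ξ in {ξ | ε < ‖ξ - x‖}, (‖x - ξ‖ ^ p)⁻¹ • (u ξ - u x) ∂μ) (𝓝[>] 0)
      (𝓝 (hypersingularIntegral μ p u x)) := by
  have hk := isRieszRegularization_truncatedRieszKernel (E := E) ((Nat.cast_nonneg _).trans hp.le)
  refine (hk.tendsto_integral_smul_sub hp hu hux).congr fun ε ↦ ?_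
  rw [← integral_indicator (measurableSet_lt measurable_const (by fun_prop))]
  congr 1 with ξ
  simp [truncatedRieszKernel, indicator_apply, norm_sub_rev x ξ, Real.rpow_neg, ite_smul]

end Limit

section Poisson

variable {E F : Type*} [NormedAddCommGroup E] [NormedSpace ℝ E] [MeasurableSpace E]
  [NormedAddCommGroup F] [NormedSpace ℝ F] {s y : ℝ}

/-- The normalization constant of the Poisson kernel on `E`, generalizing `poissonB`. -/
noncomputable def fracPoissonConst (μ : Measure E) (s : ℝ) : ℝ :=
  (∫ ξ, (1 + ‖ξ‖ ^ 2) ^ (-((finrank ℝ E + 2 * s) / 2)) ∂μ)⁻¹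

/-- The Caffarelli–Silvestre Poisson kernel `P(z, y)` on `E`, with the height `y` as a parameter. -/
noncomputable def fracPoissonKernel (μ : Measure E) (s y : ℝ) (z : E) : ℝ :=
  fracPoissonConst μ s * y ^ (2 * s) / (‖z‖ ^ 2 + y ^ 2) ^ ((finrank ℝ E + 2 * s) / 2)

lemma fracPoissonKernel_eq_mul_smoothedRieszKernel (μ : Measure E) (s y : ℝ) (z : E) :
    fracPoissonKernel μ s y z =
      fracPoissonConst μ s * y ^ (2 * s) * smoothedRieszKernel (finrank ℝ E + 2 * s) y z := by
  rw [fracPoissonKernel, smoothedRieszKernel, Real.rpow_neg (by positivity), div_eq_mul_inv]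

variable [BorelSpace E] [FiniteDimensional ℝ E] (μ : Measure E) [μ.IsAddHaarMeasure]

lemma integral_smoothedRieszKernel (p : ℝ) (hy : 0 < y) :
    ∫ z, smoothedRieszKernel p y z ∂μ =
      y ^ (finrank ℝ E - p) * ∫ z, (1 + ‖z‖ ^ 2) ^ (-(p / 2)) ∂μ := by
  simp only [smoothedRieszKernel_eq_rpow_mul p hy]
  rw [integral_const_mul,
    Measure.integral_comp_inv_smul_of_nonneg μ (fun z ↦ (1 + ‖z‖ ^ 2) ^ (-(p / 2))) hy.le,
    smul_eq_mul, ← mul_assoc, ← Real.rpow_natCast, ← Real.rpow_add hy, neg_add_eq_sub]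

lemma integral_one_add_norm_sq_rpow_neg_half_pos {p : ℝ} (hp : finrank ℝ E < p) :
    0 < ∫ z, (1 + ‖z‖ ^ 2) ^ (-(p / 2)) ∂μ := by
  refine integral_pos_of_integrable_nonneg_nonzero (x := 0)
    (.rpow_const (by fun_prop) fun z ↦ Or.inl (by positivity))
    (integrable_one_add_norm_sq_rpow_neg_half hp) (fun z ↦ ?_) (by simp)
  exact Real.rpow_nonneg (by positivity) _

lemma integral_fracPoissonKernel (hs : 0 < s) (hy : 0 < y) :
    ∫ z, fracPoissonKernel μ s y z ∂μ = 1 := by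
  have h_pos := integral_one_add_norm_sq_rpow_neg_half_pos μ
    (show finrank ℝ E < finrank ℝ E + 2 * s by linarith)
  have h_exp : (finrank ℝ E - (finrank ℝ E + 2 * s) : ℝ) = -(2 * s) := by ring
  simp only [fracPoissonKernel_eq_mul_smoothedRieszKernel]
  rw [integral_const_mul, integral_smoothedRieszKernel μ _ hy, h_exp, Real.rpow_neg hy.le,
    fracPoissonConst]
  field_simp

variable {μ} {u : E → F}

lemma integral_fracPoissonKernel_smul_sub [CompleteSpace F] (hs : 0 < s) (hy : 0 < y)
    (hu : Integrable (fun ξ ↦ (1 + ‖ξ‖ ^ 2) ^ (-((finrank ℝ E + 2 * s) / 2)) • u ξ) μ) (x : E) :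
    ∫ ξ, fracPoissonKernel μ s y (x - ξ) • u ξ ∂μ - u x =
      (fracPoissonConst μ s * y ^ (2 * s)) •
        ∫ ξ, smoothedRieszKernel (finrank ℝ E + 2 * s) y (ξ - x) • (u ξ - u x) ∂μ := by
  have hp : finrank ℝ E < finrank ℝ E + 2 * s := by linarith
  have hk := isRieszRegularization_smoothedRieszKernel (E := E)
    (show 0 ≤ finrank ℝ E + 2 * s by positivity)
  let k := smoothedRieszKernel (E := E) (finrank ℝ E + 2 * s) y
  let c := fracPoissonConst μ s * y ^ (2 * s)
  have h_kernel (ξ : E) : fracPoissonKernel μ s y (x - ξ) = c * k (ξ - x) := by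
    rw [fracPoissonKernel_eq_mul_smoothedRieszKernel, ← hk.even, neg_sub]
  have h_sub : Integrable (fun ξ ↦ k (ξ - x) • (u ξ - u x)) μ := by
    simpa using (hk.integrable_smul_sub hy hp hu x).comp_sub_right x
  have h_const : Integrable (fun ξ ↦ k (ξ - x) • u x) μ :=
    ((hk.integrable hy hp).comp_sub_right x).smul_const (u x)
  have h_mass : c • ∫ ξ, k (ξ - x) • u x ∂μ = u x := by
    rw [integral_smul_const, smul_smul, ← integral_const_mul]
    simp only [← h_kernel]
    rw [integral_sub_left_eq_self (fracPoissonKernel μ s y), integral_fracPoissonKernel μ hs hy,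
      one_smul]
  calc ∫ ξ, fracPoissonKernel μ s y (x - ξ) • u ξ ∂μ - u x
      = c • ∫ ξ, k (ξ - x) • (u ξ - u x) + k (ξ - x) • u x ∂μ - u x := by
        simp only [h_kernel, mul_smul, integral_smul, ← smul_add, sub_add_cancel]
    _ = c • ∫ ξ, k (ξ - x) • (u ξ - u x) ∂μ := by
        rw [integral_add h_sub h_const, smul_add, h_mass, add_sub_cancel_right]

lemma tendsto_rpow_inv_smul_integral_fracPoissonKernel_smul_sub [CompleteSpace F] (hs : 0 < s)
    {x : E}
    (hu : Integrable (fun ξ ↦ (1 + ‖ξ‖ ^ 2) ^ (-((finrank ℝ E + 2 * s) / 2)) • u ξ) μ)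
    (hux : Integrable (fun z ↦ ‖z‖ ^ (-(finrank ℝ E + 2 * s)) • secondDiff u x z) μ) :
    Tendsto (fun y ↦ (y ^ (2 * s))⁻¹ • (∫ ξ, fracPoissonKernel μ s y (x - ξ) • u ξ ∂μ - u x))
      (𝓝[>] 0) (𝓝 (fracPoissonConst μ s • hypersingularIntegral μ (finrank ℝ E + 2 * s) u x)) := by
  have hk := isRieszRegularization_smoothedRieszKernel (E := E)
    (show 0 ≤ finrank ℝ E + 2 * s by positivity)
  refine ((hk.tendsto_integral_smul_sub (by linarith) hu hux).const_smul _).congr' ?_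
  filter_upwards [self_mem_nhdsWithin] with y (hy : 0 < y)
  rw [integral_fracPoissonKernel_smul_sub hs hy hu, mul_comm (fracPoissonConst μ s), mul_smul,
    inv_smul_smul₀ (Real.rpow_pos_of_pos hy _).ne']

end Poisson

lemma integrable_one_add_norm_sq_rpow_smul_schwartzMap {E F : Type*} [NormedAddCommGroup E]
    [NormedSpace ℝ E] [MeasurableSpace E] [BorelSpace E] [SecondCountableTopology E]
    [NormedAddCommGroup F] [NormedSpace ℝ F] {μ : Measure E} [μ.HasTemperateGrowth] {q : ℝ}
    (hq : 0 ≤ q) (u : SchwartzMap E F) : Integrable (fun ξ ↦ (1 + ‖ξ‖ ^ 2) ^ (-q) • u ξ) μ := by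
  refine u.integrable.bdd_smul 1 (Measurable.aestronglyMeasurable (by fun_prop))
    (.of_forall fun ξ ↦ ?_)
  rw [Real.norm_of_nonneg (by positivity)]
  exact Real.rpow_le_one_of_one_le_of_nonpos (by linarith [sq_nonneg ‖ξ‖]) (neg_nonpos.2 hq)

theorem caffarelliSilvestre_trace_general {E F : Type*} [NormedAddCommGroup E] [NormedSpace ℝ E]
    [FiniteDimensional ℝ E] [Nontrivial E] [MeasurableSpace E] [BorelSpace E]
    [NormedAddCommGroup F] [NormedSpace ℝ F] [CompleteSpace F] (μ : Measure E)
    [μ.IsAddHaarMeasure] {s α : ℝ} (hs : 0 < s) (hα : 2 * s < α) {u : E → F} {x : E}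
    (hu : Integrable (fun ξ ↦ (1 + ‖ξ‖ ^ 2) ^ (-((finrank ℝ E + 2 * s) / 2)) • u ξ) μ)
    (hux : secondDiff u x =O[𝓝 0] fun z ↦ ‖z‖ ^ α) :
    ∃ L : F,
      Tendsto
        (fun ε ↦ ∫ ξ in {ξ | ε < ‖ξ - x‖}, (‖x - ξ‖ ^ (finrank ℝ E + 2 * s))⁻¹ • (u ξ - u x) ∂μ)
        (𝓝[>] 0) (𝓝 L) ∧
      Tendsto (fun y ↦ (y ^ (2 * s))⁻¹ • (∫ ξ, fracPoissonKernel μ s y (x - ξ) • u ξ ∂μ - u x))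
        (𝓝[>] 0) (𝓝 (fracPoissonConst μ s • L)) := by
  have hp : (finrank ℝ E : ℝ) < finrank ℝ E + 2 * s := by linarith
  have h_int := integrable_norm_rpow_neg_smul_secondDiff hp (by linarith) hu hux
  exact ⟨hypersingularIntegral μ (finrank ℝ E + 2 * s) u x,
    tendsto_setIntegral_norm_rpow_inv_smul_sub hp hu h_int,
    tendsto_rpow_inv_smul_integral_fracPoissonKernel_smul_sub hs hu h_int⟩

/-- For a Schwartz function `u`, the normal-derivative trace of its
Caffarelli–Silvestre extension
`v(x,y) = ∫ P(x−ξ,y) u(ξ) dξ`, with `P(x,y) = B_{n,s} y^{2s}/(|x|²+y²)^{(n+2s)/2}`,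
recovers `B_{n,s}` times the principal-value fractional Laplacian:
`lim_{y→0⁺} (v(x,y) − u(x))/y^{2s} = B_{n,s} · P.V.∫ (u(ξ) − u(x))/|x−ξ|^{n+2s} dξ`,
and in particular the principal value limit on the right exists. -/
theorem caffarelliSilvestre_trace
    (n : ℕ) (hn : 1 ≤ n) (s : ℝ) (hs : s ∈ Set.Ioo (0:ℝ) 1)
    (u : SchwartzMap (EuclideanSpace ℝ (Fin n)) ℝ) (x : EuclideanSpace ℝ (Fin n)) :
    ∃ L : ℝ,
      Filter.Tendsto
        (fun ε : ℝ => ∫ ξ in {ξ : EuclideanSpace ℝ (Fin n) | ε < ‖ξ - x‖},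
          (u ξ - u x) / ‖x - ξ‖ ^ ((n : ℝ) + 2 * s))
        (𝓝[>] (0:ℝ)) (𝓝 L) ∧
      Filter.Tendsto
        (fun y : ℝ =>
          ((∫ ξ : EuclideanSpace ℝ (Fin n),
              (poissonB n s * y ^ (2 * s) /
                (‖x - ξ‖ ^ 2 + y ^ 2) ^ (((n : ℝ) + 2 * s) / 2)) * u ξ) - u x) / y ^ (2 * s))
        (𝓝[>] (0:ℝ)) (𝓝 (poissonB n s * L)) := by
  have : Nonempty (Fin n) := ⟨⟨0, hn⟩⟩
  have hu := integrable_one_add_norm_sq_rpow_smul_schwartzMap (μ := volume)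
    (q := (finrank ℝ (EuclideanSpace ℝ (Fin n)) + 2 * s) / 2) (by have := hs.1; positivity) u
  have hux : secondDiff u x =O[𝓝 0] fun z ↦ ‖z‖ ^ (2 : ℝ) := by
    simpa using isBigO_secondDiff_of_contDiffAt (x := x) (u.smooth 2).contDiffAt
  simpa [fracPoissonKernel, fracPoissonConst, poissonB, div_eq_inv_mul] using
    caffarelliSilvestre_trace_general volume hs.1 (by linarith [hs.2]) hu hux
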